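/- arXiv:1105.4983 — 2 statements merged into one kernel-verified Lean document; each statement's English description precedes it below -/
import Mathlib

section
/- The monodromy action of the paramodular group G_Δ on the 2-torsion points has precisely three orbits; concretely: for any two nonzero vectors v, w ∈ (ℤ/2ℤ)⁴, there exists M ∈ G_Δ with (E(M) mod 2)·v = w if and only if the conditions '(v₂, v₄) = (0,0)' and '(w₂, w₄) = (0,0)' are equivalent. Hence the orbits of the action on (ℤ/2ℤ)⁴ are exactly: the zero vector; the three nonzero vectors with second and fourth coordinates zero; and the remaining twelve vectors. -/
open Matrix

/-- The standard symplectic matrix `J = [[0, I₂], [−I₂, 0]]` over `ℚ`. -/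
def Jmat : Matrix (Fin 4) (Fin 4) ℚ :=
  !![0, 0, 1, 0; 0, 0, 0, 1; -1, 0, 0, 0; 0, -1, 0, 0]

/-- A rational number is an integer. -/
def IsIntEntry (q : ℚ) : Prop := ∃ n : ℤ, q = n

/-- A rational number is an even integer (lies in `2ℤ`). -/
def IsEvenEntry (q : ℚ) : Prop := ∃ n : ℤ, q = 2 * n

/-- A rational number is a half-integer (`2·q ∈ ℤ`). -/
def IsHalfIntEntry (q : ℚ) : Prop := ∃ n : ℤ, 2 * q = n

/-- Membership in the paramodular group `G_Δ` for `Δ = diag(1,2)`: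
`Mᵀ·J·M = J`, together with the integrality pattern: all entries in `ℤ`,
except that `M₁₄, M₂₁, M₂₃, M₂₄, M₃₄ ∈ 2ℤ` and `2·M₄₂ ∈ ℤ`
(indices here are 0-based: `M 0 3, M 1 0, M 1 2, M 1 3, M 2 3, M 3 1`). -/
def IsParamodular (M : Matrix (Fin 4) (Fin 4) ℚ) : Prop :=
  Mᵀ * Jmat * M = Jmat ∧
  IsEvenEntry (M 0 3) ∧ IsEvenEntry (M 1 0) ∧ IsEvenEntry (M 1 2) ∧
  IsEvenEntry (M 1 3) ∧ IsEvenEntry (M 2 3) ∧ IsHalfIntEntry (M 3 1) ∧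
  ∀ i j : Fin 4,
    (i, j) ∉ ({(0, 3), (1, 0), (1, 2), (1, 3), (2, 3), (3, 1)} :
      Set (Fin 4 × Fin 4)) → IsIntEntry (M i j)

/-- The diagonal matrix `D = diag(1,1,1,2)` over `ℚ`. -/
def Dmat : Matrix (Fin 4) (Fin 4) ℚ :=
  !![1, 0, 0, 0; 0, 1, 0, 0; 0, 0, 1, 0; 0, 0, 0, 2]

/-- The conjugation `E(M) = D·M·D⁻¹`. -/
noncomputable def Emat (M : Matrix (Fin 4) (Fin 4) ℚ) : Matrix (Fin 4) (Fin 4) ℚ :=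
  Dmat * M * Dmat⁻¹

/-- Reduction modulo 2 of a rational matrix with integer entries
(entrywise, via the numerator). -/
def red2 (M : Matrix (Fin 4) (Fin 4) ℚ) : Matrix (Fin 4) (Fin 4) (ZMod 2) :=
  Matrix.of fun i j => ((M i j).num : ZMod 2)

/-!
Conjugation by `D` turns `J` into half of the alternating form
`2 (x₁ y₃ - x₃ y₁) + (x₂ y₄ - x₄ y₂)`, and identifies `G_Δ` with the group of all integral
isometries of that form. An isometry reduces modulo 2 to an invertible matrix, so it preserves the
radical `x₂ = x₄ = 0` of the reduced form. Conversely, two vectors outside the radical are joined by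
two symplectic transvections, because some vector pairs to `1` with both of them. The lifts of
radical vectors supported on the first and third coordinates pair evenly with everything, so the
transvections for half the form are integral there, and they join any two distinct nonzero vectors
of the radical.
-/

section Isometry

variable {n R S : Type*} [Fintype n] [DecidableEq n] [CommRing R] [CommRing S]

/-- The monoid of matrices preserving the bilinear form with Gram matrix `K`. -/
def isometryMonoid (K : Matrix n n R) : Submonoid (Matrix n n R) where
  carrier := {A | Aᵀ * K * A = K}
  one_mem' := by simp
  mul_mem' {A B} hA hB := by
    calc (A * B)ᵀ * K * (A * B) = Bᵀ * (Aᵀ * K * A) * B := by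
          simp only [transpose_mul, Matrix.mul_assoc]
      _ = K := by rw [hA, hB]

lemma mem_isometryMonoid_iff {K A : Matrix n n R} : A ∈ isometryMonoid K ↔ Aᵀ * K * A = K :=
  Iff.rfl

lemma map_mem_isometryMonoid (φ : R →+* S) {K A : Matrix n n R} (hA : A ∈ isometryMonoid K) :
    A.map φ ∈ isometryMonoid (K.map φ) := by
  rw [mem_isometryMonoid_iff, ← transpose_map, ← Matrix.map_mul, ← Matrix.map_mul,
    mem_isometryMonoid_iff.1 hA]

lemma map_mem_isometryMonoid_iff {φ : R →+* S} (hφ : Function.Injective φ) {K A : Matrix n n R} :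
    A.map φ ∈ isometryMonoid (K.map φ) ↔ A ∈ isometryMonoid K := by
  rw [mem_isometryMonoid_iff, ← transpose_map, ← Matrix.map_mul, ← Matrix.map_mul,
    (map_injective hφ).eq_iff, mem_isometryMonoid_iff]

lemma isUnit_det_of_mem_isometryMonoid [IsDomain R] {K A : Matrix n n R} (hK : K.det ≠ 0)
    (hA : A ∈ isometryMonoid K) : IsUnit A.det := by
  have hdet : A.det * K.det * A.det = K.det := by
    simpa only [det_mul, det_transpose] using congrArg det (mem_isometryMonoid_iff.1 hA)
  refine IsUnit.of_mul_eq_one A.det (mul_right_cancel₀ hK ?_)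
  linear_combination hdet

lemma mulVec_isometry_mulVec_eq_zero_iff {K A : Matrix n n R} (hA : A ∈ isometryMonoid K)
    (hdet : IsUnit A.det) (v : n → R) : K *ᵥ (A *ᵥ v) = 0 ↔ K *ᵥ v = 0 := by
  have hinj : Function.Injective Aᵀ.mulVec :=
    mulVec_injective_of_isUnit ((isUnit_iff_isUnit_det _).2 (by rwa [det_transpose]))
  rw [← hinj.eq_iff, mulVec_zero, mulVec_mulVec, mulVec_mulVec,
    mem_isometryMonoid_iff.1 hA]

lemma mul_mul_mem_isometryMonoid_iff {K P Q : Matrix n n R} (hQP : Q * P = 1) (M : Matrix n n R) :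
    P * M * Q ∈ isometryMonoid K ↔ M ∈ isometryMonoid (Pᵀ * K * P) := by
  have hPQ : P * Q = 1 := mul_eq_one_comm.1 hQP
  have hQPt : Qᵀ * Pᵀ = 1 := by rw [← transpose_mul, hPQ, transpose_one]
  have hPQt : Pᵀ * Qᵀ = 1 := by rw [← transpose_mul, hQP, transpose_one]
  simp only [mem_isometryMonoid_iff]
  constructor
  · intro h
    calc Mᵀ * (Pᵀ * K * P) * M
        = (Pᵀ * Qᵀ) * (Mᵀ * (Pᵀ * K * P) * M) * (Q * P) := by rw [hPQt, hQP]; simp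
      _ = Pᵀ * ((P * M * Q)ᵀ * K * (P * M * Q)) * P := by
          simp only [transpose_mul, Matrix.mul_assoc]
      _ = Pᵀ * K * P := by rw [h]
  · intro h
    calc (P * M * Q)ᵀ * K * (P * M * Q)
        = Qᵀ * (Mᵀ * (Pᵀ * K * P) * M) * Q := by simp only [transpose_mul, Matrix.mul_assoc]
      _ = (Qᵀ * Pᵀ) * K * (P * Q) := by rw [h]; simp only [Matrix.mul_assoc]
      _ = K := by rw [hQPt, hPQ]; simp

lemma isometryMonoid_smul [IsDomain R] {c : R} (hc : c ≠ 0) (K : Matrix n n R) :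
    isometryMonoid (c • K) = isometryMonoid K := by
  ext A
  simp only [mem_isometryMonoid_iff, Matrix.mul_smul, Matrix.smul_mul]
  exact (smul_right_injective _ hc).eq_iff

lemma one_add_vecMulVec_mem_isometryMonoid {K : Matrix n n R} (hK : Kᵀ = -K) {c : R} {u f : n → R}
    (hu : u ᵥ* K = c • f) (hfu : f ⬝ᵥ u = 0) : 1 + vecMulVec u f ∈ isometryMonoid K := by
  have hKu : K *ᵥ u = -(c • f) := by
    rw [← vecMul_transpose, hK, vecMul_neg, hu]
  rw [mem_isometryMonoid_iff, transpose_add, transpose_one, transpose_vecMulVec, Matrix.add_mul,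
    Matrix.one_mul, vecMulVec_mul, hu, Matrix.mul_add, Matrix.mul_one, Matrix.add_mul,
    mul_vecMulVec, hKu, vecMulVec_mul_vecMulVec, smul_dotProduct, hfu]
  simp [smul_vecMulVec, vecMulVec_smul]

variable [Algebra R S]

/-- Some isometry of `K` over `R`, after reduction to the `R`-algebra `S`, sends `v` to `w`. -/
def IsometryCarries (K : Matrix n n R) (v w : n → S) : Prop :=
  ∃ A ∈ isometryMonoid K, A.map (algebraMap R S) *ᵥ v = w

lemma IsometryCarries.refl (K : Matrix n n R) (v : n → S) : IsometryCarries K v v :=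
  ⟨1, one_mem _, by simp⟩

lemma IsometryCarries.trans {K : Matrix n n R} {u v w : n → S} (huv : IsometryCarries K u v)
    (hvw : IsometryCarries K v w) : IsometryCarries K u w := by
  obtain ⟨A, hA, rfl⟩ := huv
  obtain ⟨B, hB, rfl⟩ := hvw
  exact ⟨B * A, mul_mem hB hA, by rw [Matrix.map_mul, mulVec_mulVec]⟩

lemma isometryCarries_of_transvection {K : Matrix n n R} (hK : Kᵀ = -K) {c : R} {u f : n → R}
    (hu : u ᵥ* K = c • f) (hfu : f ⬝ᵥ u = 0) {v w : n → S} (huvw : algebraMap R S ∘ u = w - v)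
    (hfv : (algebraMap R S ∘ f) ⬝ᵥ v = 1) : IsometryCarries K v w := by
  refine ⟨1 + vecMulVec u f, one_add_vecMulVec_mem_isometryMonoid hK hu hfu, ?_⟩
  have hmap : (1 + vecMulVec u f).map (algebraMap R S) =
      1 + vecMulVec (algebraMap R S ∘ u) (algebraMap R S ∘ f) := by
    ext i j
    simp [vecMulVec_apply, one_apply, apply_ite]
  rw [hmap, add_mulVec, one_mulVec, vecMulVec_mulVec, hfv, huvw]
  simp

end Isometry

section TypeForm

variable {R S : Type*} [CommRing R] [CommRing S]

/-- The Gram matrix of the alternating form `2 (x₁ y₃ - x₃ y₁) + (x₂ y₄ - x₄ y₂)` over `R`,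
which is twice the form `J` in the coordinates `D x`. -/
def typeForm (R : Type*) [CommRing R] : Matrix (Fin 4) (Fin 4) R :=
  !![0, 0, 2, 0; 0, 0, 0, 1; -2, 0, 0, 0; 0, -1, 0, 0]

lemma typeForm_map (φ : R →+* S) : (typeForm R).map φ = typeForm S := by
  ext i j
  fin_cases i <;> fin_cases j <;> simp [typeForm, map_ofNat]

lemma typeForm_transpose : (typeForm R)ᵀ = -typeForm R := by
  ext i j
  fin_cases i <;> fin_cases j <;> simp [typeForm]

lemma det_typeForm : (typeForm R).det = 4 := by
  have htwo : (2 : R) * 2 = 4 := by norm_num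
  simp [typeForm, det_succ_row_zero, Fin.sum_univ_succ, Fin.succAbove, htwo]

lemma typeForm_mulVec (v : Fin 4 → R) : typeForm R *ᵥ v = ![2 * v 2, v 3, -2 * v 0, -v 1] := by
  ext i
  fin_cases i <;> simp [typeForm, mulVec, dotProduct, Fin.sum_univ_four]

lemma vecMul_typeForm (u : Fin 4 → R) : u ᵥ* typeForm R = ![-2 * u 2, -u 3, 2 * u 0, u 1] := by
  ext i
  fin_cases i <;> simp [typeForm, vecMul, dotProduct, Fin.sum_univ_four, mul_comm]

lemma typeForm_mulVec_eq_zero_iff [CharP R 2] (v : Fin 4 → R) :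
    typeForm R *ᵥ v = 0 ↔ v 1 = 0 ∧ v 3 = 0 := by
  have htwo : (2 : R) = 0 := CharTwo.two_eq_zero
  simp [typeForm_mulVec, htwo, and_comm]

variable [Algebra R S]

lemma isometryCarries_typeForm_of_pairing_eq_one
    (hsurj : Function.Surjective (algebraMap R S)) {v w : Fin 4 → S}
    (hvw : w ⬝ᵥ typeForm S *ᵥ v = 1) : IsometryCarries (typeForm R) v w := by
  obtain ⟨u, hu⟩ := hsurj.comp_left (w - v)
  have hu' (i : Fin 4) : algebraMap R S (u i) = w i - v i := congrFun hu i
  refine isometryCarries_of_transvection (f := u ᵥ* typeForm R) typeForm_transpose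
    (one_smul R _).symm ?_ hu ?_
  · simp only [vecMul_typeForm, dotProduct, Fin.sum_univ_four, cons_val]
    ring
  · simp only [typeForm_mulVec, dotProduct, Fin.sum_univ_four, cons_val] at hvw
    simp only [vecMul_typeForm, dotProduct, Fin.sum_univ_four, Function.comp_apply, cons_val,
      map_neg, map_mul, map_ofNat, hu']
    linear_combination hvw

lemma isometryCarries_typeForm_of_half_pairing_eq_one
    (hsurj : Function.Surjective (algebraMap R S)) {v w : Fin 4 → S}
    (hv : v 1 = 0 ∧ v 3 = 0) (hw : w 1 = 0 ∧ w 3 = 0) (hvw : w 0 * v 2 - w 2 * v 0 = 1) :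
    IsometryCarries (typeForm R) v w := by
  obtain ⟨a, ha⟩ := hsurj (w 0 - v 0)
  obtain ⟨b, hb⟩ := hsurj (w 2 - v 2)
  refine isometryCarries_of_transvection (c := 2) (u := ![a, 0, b, 0]) (f := ![-b, 0, a, 0])
    typeForm_transpose ?_ ?_ ?_ ?_
  · simp [vecMul_typeForm]
  · simp [dotProduct, Fin.sum_univ_four, mul_comm]
  · ext i
    fin_cases i <;> simp [ha, hb, hv, hw]
  · simp only [dotProduct, Fin.sum_univ_four, Function.comp_apply, cons_val, map_neg, map_zero,
      ha, hb]
    linear_combination hvw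

lemma typeForm_mulVec_isometry_eq_zero_iff [IsDomain R] (hfour : (4 : R) ≠ 0)
    {A : Matrix (Fin 4) (Fin 4) R} (hA : A ∈ isometryMonoid (typeForm R)) (v : Fin 4 → S) :
    typeForm S *ᵥ (A.map (algebraMap R S) *ᵥ v) = 0 ↔ typeForm S *ᵥ v = 0 := by
  refine mulVec_isometry_mulVec_eq_zero_iff ?_ ?_ v
  · simpa only [typeForm_map] using map_mem_isometryMonoid (algebraMap R S) hA
  · have hdet := isUnit_det_of_mem_isometryMonoid (det_typeForm.trans_ne hfour) hA
    simpa only [RingHom.map_det, RingHom.mapMatrix_apply] using hdet.map (algebraMap R S)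

end TypeForm

section ModTwo

lemma isometry_mulVec_radical_iff {A : Matrix (Fin 4) (Fin 4) ℤ}
    (hA : A ∈ isometryMonoid (typeForm ℤ)) (v : Fin 4 → ZMod 2) :
    ((A.map (algebraMap ℤ (ZMod 2)) *ᵥ v) 1 = 0 ∧ (A.map (algebraMap ℤ (ZMod 2)) *ᵥ v) 3 = 0) ↔
      (v 1 = 0 ∧ v 3 = 0) := by
  simp only [← typeForm_mulVec_eq_zero_iff]
  exact typeForm_mulVec_isometry_eq_zero_iff (by norm_num) hA v

lemma two_dvd_entries_of_mem_isometryMonoid {A : Matrix (Fin 4) (Fin 4) ℤ}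
    (hA : A ∈ isometryMonoid (typeForm ℤ)) {j : Fin 4} (hj : j = 0 ∨ j = 2) :
    2 ∣ A 1 j ∧ 2 ∣ A 3 j := by
  have hcol := (isometry_mulVec_radical_iff hA (Pi.single j 1)).2 (by
    rcases hj with rfl | rfl <;> decide)
  simpa [ZMod.intCast_eq_zero_iff_even, even_iff_two_dvd] using hcol

lemma exists_common_pairing_eq_one {v w : Fin 4 → ZMod 2} (hv : ¬(v 1 = 0 ∧ v 3 = 0))
    (hw : ¬(w 1 = 0 ∧ w 3 = 0)) :
    ∃ u : Fin 4 → ZMod 2,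
      u ⬝ᵥ typeForm (ZMod 2) *ᵥ v = 1 ∧ w ⬝ᵥ typeForm (ZMod 2) *ᵥ u = 1 := by
  have hplane : ∀ a b c d : ZMod 2, ¬(a = 0 ∧ b = 0) → ¬(c = 0 ∧ d = 0) →
      ∃ x y : ZMod 2, x * b - y * a = 1 ∧ c * y - d * x = 1 := by decide
  obtain ⟨x, y, hxv, hxw⟩ := hplane _ _ _ _ hv hw
  refine ⟨![0, x, 0, y], ?_, ?_⟩
  · simpa [typeForm_mulVec, dotProduct, Fin.sum_univ_four, sub_eq_add_neg] using hxv
  · simpa [typeForm_mulVec, dotProduct, Fin.sum_univ_four, sub_eq_add_neg] using hxw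

lemma isometryCarries_typeForm_of_not_mem_radical {v w : Fin 4 → ZMod 2}
    (hv : ¬(v 1 = 0 ∧ v 3 = 0)) (hw : ¬(w 1 = 0 ∧ w 3 = 0)) : IsometryCarries (typeForm ℤ) v w := by
  obtain ⟨u, huv, hwu⟩ := exists_common_pairing_eq_one hv hw
  have hsurj : Function.Surjective (algebraMap ℤ (ZMod 2)) := ZMod.intCast_surjective
  exact (isometryCarries_typeForm_of_pairing_eq_one hsurj huv).trans
    (isometryCarries_typeForm_of_pairing_eq_one hsurj hwu)

lemma isometryCarries_typeForm_of_mem_radical {v w : Fin 4 → ZMod 2} (hv₀ : v ≠ 0) (hw₀ : w ≠ 0)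
    (hv : v 1 = 0 ∧ v 3 = 0) (hw : w 1 = 0 ∧ w 3 = 0) : IsometryCarries (typeForm ℤ) v w := by
  rcases eq_or_ne v w with rfl | hne
  · exact .refl _ _
  have hplane : ∀ a b c d : ZMod 2, ¬(a = 0 ∧ b = 0) → ¬(c = 0 ∧ d = 0) → ¬(a = c ∧ b = d) →
      c * b - d * a = 1 := by decide
  refine isometryCarries_typeForm_of_half_pairing_eq_one ZMod.intCast_surjective hv hw
    (hplane _ _ _ _ ?_ ?_ ?_)
  · simpa [funext_iff, Fin.forall_fin_succ, hv] using hv₀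
  · simpa [funext_iff, Fin.forall_fin_succ, hw] using hw₀
  · simpa [funext_iff, Fin.forall_fin_succ, hv, hw] using hne

theorem isometryCarries_typeForm_iff {v w : Fin 4 → ZMod 2} (hv : v ≠ 0) (hw : w ≠ 0) :
    IsometryCarries (typeForm ℤ) v w ↔ ((v 1 = 0 ∧ v 3 = 0) ↔ (w 1 = 0 ∧ w 3 = 0)) := by
  constructor
  · rintro ⟨A, hA, rfl⟩
    exact (isometry_mulVec_radical_iff hA v).symm
  · intro h
    by_cases hrad : v 1 = 0 ∧ v 3 = 0
    · exact isometryCarries_typeForm_of_mem_radical hv hw hrad (h.1 hrad)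
    · exact isometryCarries_typeForm_of_not_mem_radical hrad (mt h.2 hrad)

end ModTwo

section Paramodular

lemma Dmat_inv : Dmat⁻¹ = !![1, 0, 0, 0; 0, 1, 0, 0; 0, 0, 1, 0; 0, 0, 0, 1 / 2] := by
  refine inv_eq_right_inv ?_
  ext i j
  fin_cases i <;> fin_cases j <;> simp [Dmat, mul_apply, Fin.sum_univ_four]

lemma isUnit_det_Dmat : IsUnit Dmat.det := by
  simp [Dmat, det_succ_row_zero, Fin.sum_univ_succ]

lemma Emat_eq (M : Matrix (Fin 4) (Fin 4) ℚ) :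
    Emat M = !![M 0 0, M 0 1, M 0 2, M 0 3 / 2;
                M 1 0, M 1 1, M 1 2, M 1 3 / 2;
                M 2 0, M 2 1, M 2 2, M 2 3 / 2;
                2 * M 3 0, 2 * M 3 1, 2 * M 3 2, M 3 3] := by
  rw [Emat, Dmat_inv]
  ext i j
  fin_cases i <;> fin_cases j <;>
    simp [mul_apply, Fin.sum_univ_four, Dmat, vecMul, dotProduct,
      div_eq_mul_inv, mul_comm]

lemma eq_of_Emat_eq {M N : Matrix (Fin 4) (Fin 4) ℚ} (h : Emat M = N) :
    M = !![N 0 0, N 0 1, N 0 2, 2 * N 0 3;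
           N 1 0, N 1 1, N 1 2, 2 * N 1 3;
           N 2 0, N 2 1, N 2 2, 2 * N 2 3;
           N 3 0 / 2, N 3 1 / 2, N 3 2 / 2, N 3 3] := by
  subst h
  ext i j
  fin_cases i <;> fin_cases j <;> simp [Emat_eq, mul_div_cancel₀]

lemma Emat_surjective : Function.Surjective Emat := fun N ↦
  ⟨Dmat⁻¹ * (N * Dmat), by
    rw [Emat, mul_nonsing_inv_cancel_left _ _ isUnit_det_Dmat,
      mul_nonsing_inv_cancel_right _ _ isUnit_det_Dmat]⟩

lemma Dmat_transpose_mul_typeForm_mul_Dmat : Dmatᵀ * typeForm ℚ * Dmat = (2 : ℚ) • Jmat := by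
  ext i j
  fin_cases i <;> fin_cases j <;>
    simp [Dmat, typeForm, Jmat, mul_apply, Fin.sum_univ_four]

lemma Emat_mem_isometryMonoid_iff {M : Matrix (Fin 4) (Fin 4) ℚ} :
    Emat M ∈ isometryMonoid (typeForm ℚ) ↔ M ∈ isometryMonoid Jmat := by
  rw [Emat, mul_mul_mem_isometryMonoid_iff (nonsing_inv_mul _ isUnit_det_Dmat),
    Dmat_transpose_mul_typeForm_mul_Dmat, isometryMonoid_smul two_ne_zero]

lemma IsParamodular.exists_Emat_eq_map {M : Matrix (Fin 4) (Fin 4) ℚ} (hM : IsParamodular M) :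
    ∃ A : Matrix (Fin 4) (Fin 4) ℤ, Emat M = A.map (algebraMap ℤ ℚ) := by
  obtain ⟨-, ⟨a₀₃, h₀₃⟩, ⟨a₁₀, h₁₀⟩, ⟨a₁₂, h₁₂⟩, ⟨a₁₃, h₁₃⟩, ⟨a₂₃, h₂₃⟩, ⟨a₃₁, h₃₁⟩, hint⟩ := hM
  have hentry (i j : Fin 4) : ∃ a : ℤ, Emat M i j = a := by
    by_cases hij : (i, j) ∈ ({(0, 3), (1, 0), (1, 2), (1, 3), (2, 3), (3, 1)} :
      Set (Fin 4 × Fin 4))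
    · simp only [Set.mem_insert_iff, Set.mem_singleton_iff, Prod.mk.injEq] at hij
      rcases hij with ⟨rfl, rfl⟩ | ⟨rfl, rfl⟩ | ⟨rfl, rfl⟩ | ⟨rfl, rfl⟩ | ⟨rfl, rfl⟩ | ⟨rfl, rfl⟩
      · exact ⟨a₀₃, by simp [Emat_eq, h₀₃]⟩
      · exact ⟨2 * a₁₀, by simp [Emat_eq, h₁₀]⟩
      · exact ⟨2 * a₁₂, by simp [Emat_eq, h₁₂]⟩
      · exact ⟨a₁₃, by simp [Emat_eq, h₁₃]⟩
      · exact ⟨a₂₃, by simp [Emat_eq, h₂₃]⟩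
      · exact ⟨a₃₁, by simp [Emat_eq, h₃₁]⟩
    · obtain ⟨a, ha⟩ := hint i j hij
      refine ⟨if i = 3 ∧ j ≠ 3 then 2 * a else a, ?_⟩
      fin_cases i <;> fin_cases j <;> simp_all [Emat_eq]
  choose A hA using hentry
  exact ⟨of A, by ext i j; exact hA i j⟩

lemma isParamodular_of_Emat_eq_map {M : Matrix (Fin 4) (Fin 4) ℚ} {A : Matrix (Fin 4) (Fin 4) ℤ}
    (hA : A ∈ isometryMonoid (typeForm ℤ)) (hMA : Emat M = A.map (algebraMap ℤ ℚ)) :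
    IsParamodular M := by
  have hJ : M ∈ isometryMonoid Jmat := by
    rw [← Emat_mem_isometryMonoid_iff, hMA, ← typeForm_map (algebraMap ℤ ℚ)]
    exact map_mem_isometryMonoid _ hA
  obtain ⟨⟨a₁₀, h₁₀⟩, ⟨a₃₀, h₃₀⟩⟩ := two_dvd_entries_of_mem_isometryMonoid hA (.inl rfl)
  obtain ⟨⟨a₁₂, h₁₂⟩, ⟨a₃₂, h₃₂⟩⟩ := two_dvd_entries_of_mem_isometryMonoid hA (.inr rfl)
  have hM := eq_of_Emat_eq hMA
  refine ⟨hJ, ⟨A 0 3, by simp [hM]⟩, ⟨a₁₀, by simp [hM, h₁₀]⟩, ⟨a₁₂, by simp [hM, h₁₂]⟩,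
    ⟨A 1 3, by simp [hM]⟩, ⟨A 2 3, by simp [hM]⟩, ⟨A 3 1, by simp [hM, mul_div_cancel₀]⟩,
    fun i j hij ↦ ⟨if (i, j) = (3, 0) then a₃₀ else if (i, j) = (3, 2) then a₃₂ else A i j, ?_⟩⟩
  fin_cases i <;> fin_cases j <;> simp_all

lemma isParamodular_iff {M : Matrix (Fin 4) (Fin 4) ℚ} :
    IsParamodular M ↔ ∃ A ∈ isometryMonoid (typeForm ℤ), Emat M = A.map (algebraMap ℤ ℚ) := by
  constructor
  · intro hM
    obtain ⟨A, hMA⟩ := hM.exists_Emat_eq_map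
    refine ⟨A, ?_, hMA⟩
    rw [← map_mem_isometryMonoid_iff (algebraMap ℤ ℚ).injective_int, typeForm_map, ← hMA]
    exact Emat_mem_isometryMonoid_iff.2 hM.1
  · rintro ⟨A, hA, hMA⟩
    exact isParamodular_of_Emat_eq_map hA hMA

lemma red2_map (A : Matrix (Fin 4) (Fin 4) ℤ) :
    red2 (A.map (algebraMap ℤ ℚ)) = A.map (algebraMap ℤ (ZMod 2)) := by
  ext i j
  simp [red2]

theorem exists_isParamodular_mulVec_eq_iff {v w : Fin 4 → ZMod 2} :
    (∃ M, IsParamodular M ∧ red2 (Emat M) *ᵥ v = w) ↔ IsometryCarries (typeForm ℤ) v w := by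
  constructor
  · rintro ⟨M, hM, hMv⟩
    obtain ⟨A, hA, hMA⟩ := isParamodular_iff.1 hM
    exact ⟨A, hA, by rwa [hMA, red2_map] at hMv⟩
  · rintro ⟨A, hA, hAv⟩
    obtain ⟨M, hMA⟩ := Emat_surjective (A.map (algebraMap ℤ ℚ))
    exact ⟨M, isParamodular_iff.2 ⟨A, hA, hMA⟩, by rwa [hMA, red2_map]⟩

end Paramodular

/-- The monodromy action of `G_Δ` on the 2-torsion points has precisely three orbits:
for nonzero `v, w ∈ (ℤ/2ℤ)⁴`, some `M ∈ G_Δ` maps `v` to `w` iff the conditions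
`(v₂, v₄) = (0,0)` and `(w₂, w₄) = (0,0)` are equivalent. -/
theorem three_orbits (v w : Fin 4 → ZMod 2) (hv : v ≠ 0) (hw : w ≠ 0) :
    (∃ M : Matrix (Fin 4) (Fin 4) ℚ,
        IsParamodular M ∧ (red2 (Emat M)).mulVec v = w) ↔
      ((v 1 = 0 ∧ v 3 = 0) ↔ (w 1 = 0 ∧ w 3 = 0)) :=
  exists_isParamodular_mulVec_eq_iff.trans (isometryCarries_typeForm_iff hv hw)
end

section
/- Let ψ₁,...,ψ₁₂ be the twelve vectors of (ℤ/2ℤ)⁴ listed in the context, and for integers d₁₁, d₁₂, d₂₁, d₂₂ with d₁₁·d₂₂ − 2·d₁₂·d₂₁ = 1 let M_d = [[d₂₂,−d₂₁,0,0],[−2d₁₂,d₁₁,0,0],[0,0,d₁₁,2d₁₂],[0,0,d₂₁,d₂₂]]. Then the permutation of {ψ₁,...,ψ₁₂} induced by multiplication by the reduction of E(M_d) modulo 2 is: (i) if d₂₁ is odd and d₁₂ is even, the permutation (ψ₃ ψ₉)(ψ₄ ψ₁₀)(ψ₅ ψ₁₁)(ψ₆ ψ₁₂), fixing the remaining four vectors;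 (ii) if d₁₂ is odd and d₂₁ is even, the permutation (ψ₁ ψ₂)(ψ₄ ψ₆)(ψ₇ ψ₈)(ψ₁₀ ψ₁₂), fixing the remaining four vectors. -/
open Matrix

/-- The twelve vectors ψ₁,…,ψ₁₂ of `(ℤ/2ℤ)⁴` (those with `(v₂,v₄) ≠ (0,0)`),
indexed by `Fin 12` (ψ_{k+1} = psi k). -/
def psi : Fin 12 → (Fin 4 → ZMod 2) :=
  ![![0, 0, 0, 1], ![0, 0, 1, 1], ![0, 1, 0, 0], ![0, 1, 0, 1],
    ![0, 1, 1, 0], ![0, 1, 1, 1], ![1, 0, 0, 1], ![1, 0, 1, 1],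
    ![1, 1, 0, 0], ![1, 1, 0, 1], ![1, 1, 1, 0], ![1, 1, 1, 1]]

/-- The matrix `M_d`. -/
def Md (d11 d12 d21 d22 : ℤ) : Matrix (Fin 4) (Fin 4) ℚ :=
  !![(d22 : ℚ), -(d21 : ℚ), 0, 0;
     -2 * (d12 : ℚ), (d11 : ℚ), 0, 0;
     0, 0, (d11 : ℚ), 2 * (d12 : ℚ);
     0, 0, (d21 : ℚ), (d22 : ℚ)]

/-- The permutation (ψ₃ ψ₉)(ψ₄ ψ₁₀)(ψ₅ ψ₁₁)(ψ₆ ψ₁₂), in 0-based indices. -/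
def permD1 : Equiv.Perm (Fin 12) :=
  Equiv.swap 2 8 * Equiv.swap 3 9 * Equiv.swap 4 10 * Equiv.swap 5 11

/-- The permutation (ψ₁ ψ₂)(ψ₄ ψ₆)(ψ₇ ψ₈)(ψ₁₀ ψ₁₂), in 0-based indices. -/
def permD2 : Equiv.Perm (Fin 12) :=
  Equiv.swap 0 1 * Equiv.swap 3 5 * Equiv.swap 6 7 * Equiv.swap 9 11

/-!
Conjugation by `D` keeps `M_d` integral and moves the factor `2` from `d₁₂` to `d₂₁` in the lower
right block. Modulo `2` the odd diagonal entries become `1`, and what is left is the product of two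
commuting transvections, `v₁ ↦ v₁ + d₂₁ v₂` and `v₃ ↦ v₃ + d₁₂ v₄`. In each parity case exactly one
of the two survives, and its action is read off on the list of the twelve vectors.
-/

theorem diagonal_mul_mul_inv_diagonal_apply {n K : Type*} [Fintype n] [DecidableEq n] [Field K]
    {d : n → K} (hd : ∀ i, d i ≠ 0) (M : Matrix n n K) (i j : n) :
    (diagonal d * M * (diagonal d)⁻¹) i j = d i * M i j / d j := by
  have hinv : (diagonal d)⁻¹ = diagonal fun i => (d i)⁻¹ :=
    inv_eq_right_inv (by simp [diagonal_mul_diagonal, hd])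
  rw [hinv, mul_diagonal, diagonal_mul, div_eq_mul_inv]

theorem transvection_mulVec {n R : Type*} [Fintype n] [DecidableEq n] [CommRing R]
    (i j : n) (c : R) (v : n → R) :
    transvection i j c *ᵥ v = v + Pi.single i (c * v j) := by
  rw [transvection, add_mulVec, one_mulVec, single_mulVec]
  rfl

theorem odd_and_odd_of_mul_sub_two_mul_mul_eq_one {a b c d : ℤ} (h : a * d - 2 * b * c = 1) :
    Odd a ∧ Odd d :=
  Int.odd_mul.mp ⟨b * c, by linarith⟩

theorem Dmat_eq_diagonal : Dmat = diagonal ![1, 1, 1, 2] := by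
  ext i j
  fin_cases i <;> fin_cases j <;> rfl

theorem Emat_apply (M : Matrix (Fin 4) (Fin 4) ℚ) (i j : Fin 4) :
    Emat M i j = ![1, 1, 1, 2] i * M i j / ![1, 1, 1, 2] j := by
  rw [Emat, Dmat_eq_diagonal]
  exact diagonal_mul_mul_inv_diagonal_apply (by simp [Fin.forall_fin_succ]) M i j

theorem red2_map_intCast (A : Matrix (Fin 4) (Fin 4) ℤ) :
    red2 (A.map (Int.cast : ℤ → ℚ)) = A.map (Int.cast : ℤ → ZMod 2) := by
  ext i j
  simp [red2]

section Monodromy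

variable (d11 d12 d21 d22 : ℤ)

theorem Emat_Md :
    Emat (Md d11 d12 d21 d22) =
      !![d22, -d21, 0, 0;
         -2 * d12, d11, 0, 0;
         0, 0, d11, d12;
         0, 0, 2 * d21, d22].map (Int.cast : ℤ → ℚ) := by
  ext i j
  rw [Emat_apply]
  fin_cases i <;> fin_cases j <;> simp [Md]

variable {d11 d22}

theorem red2_Emat_Md (h11 : Odd d11) (h22 : Odd d22) :
    red2 (Emat (Md d11 d12 d21 d22)) =
      transvection 0 1 (d21 : ZMod 2) * transvection 2 3 (d12 : ZMod 2) := by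
  have h11' : (d11 : ZMod 2) = 1 := ZMod.intCast_eq_one_iff_odd.mpr h11
  have h22' : (d22 : ZMod 2) = 1 := ZMod.intCast_eq_one_iff_odd.mpr h22
  have two_eq_zero : (2 : ZMod 2) = 0 := CharTwo.two_eq_zero
  rw [Emat_Md, red2_map_intCast]
  ext i j
  fin_cases i <;> fin_cases j <;>
    simp [transvection, add_mul, mul_add, one_apply, h11', h22', two_eq_zero]

end Monodromy

theorem psi_permD1 (k : Fin 12) : psi (permD1 k) = psi k + Pi.single (0 : Fin 4) (psi k 1) := by
  revert k
  decide

theorem psi_permD2 (k : Fin 12) : psi (permD2 k) = psi k + Pi.single (2 : Fin 4) (psi k 3) := by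
  revert k
  decide

theorem Md_monodromy_permutation_general {d11 d22 : ℤ} (d12 d21 : ℤ)
    (h11 : Odd d11) (h22 : Odd d22) :
    (Odd d21 → Even d12 → ∀ k : Fin 12,
      (red2 (Emat (Md d11 d12 d21 d22))).mulVec (psi k) = psi (permD1 k)) ∧
    (Odd d12 → Even d21 → ∀ k : Fin 12,
      (red2 (Emat (Md d11 d12 d21 d22))).mulVec (psi k) = psi (permD2 k)) := by
  rw [red2_Emat_Md d12 d21 h11 h22]
  constructor
  · intro h21 h12 k
    rw [ZMod.intCast_eq_one_iff_odd.mpr h21, ZMod.intCast_eq_zero_iff_even.mpr h12,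
      transvection_zero, mul_one, transvection_mulVec, one_mul, psi_permD1]
  · intro h12 h21 k
    rw [ZMod.intCast_eq_one_iff_odd.mpr h12, ZMod.intCast_eq_zero_iff_even.mpr h21,
      transvection_zero, one_mul, transvection_mulVec, one_mul, psi_permD2]

/-- The permutation of {ψ₁,…,ψ₁₂} induced by `E(M_d) mod 2` in the two parity
cases of `(d₂₁, d₁₂)`. -/
theorem Md_monodromy_permutation (d11 d12 d21 d22 : ℤ)
    (h : d11 * d22 - 2 * d12 * d21 = 1) :
    (Odd d21 → Even d12 → ∀ k : Fin 12,
      (red2 (Emat (Md d11 d12 d21 d22))).mulVec (psi k) = psi (permD1 k)) ∧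
    (Odd d12 → Even d21 → ∀ k : Fin 12,
      (red2 (Emat (Md d11 d12 d21 d22))).mulVec (psi k) = psi (permD2 k)) := by
  obtain ⟨h11, h22⟩ := odd_and_odd_of_mul_sub_two_mul_mul_eq_one h
  exact Md_monodromy_permutation_general d12 d21 h11 h22
end
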